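/- Let F and F' be i-faces of a connected abstract simplicial complex K with weight function w such that F ∩ F' = E is an (i−1)-face. Then the Ricci curvature satisfies κ(F, F') ≤ (1/(i+1))·( 1 + Σ_{F'' ∈ (Γ(F) ∖ Γ_E(F)) ∩ Γ(F')} w(F'')/max(deg Ē, deg Ē') ), where for each such F'', Ē = F ∩ F'' and Ē' = F' ∩ F''. -/

import Mathlib

/-!
The limit defining `ricci` has to be shown to exist before it can be estimated.

*Existence.* For an `i`-face `F`, the measure `pm ε F` is a probability measure depending affinely
on `ε`, with `pm 0 F` the Dirac mass at `F` (`pm_eq`, `pm_sum`). Mixing a coupling at parameter `t`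
with the Dirac coupling of `F` and `F'` gives `W_s ≤ (1 - s/t) + (s/t) W_t` for `0 < s ≤ t ≤ 1`
(`wass_convex`). As `d(F, F') = 1`, the quotient `κ_ε / ε` is therefore antitone in `ε` on `(0, 1)`;
being bounded above, it converges as `ε → 0+`.

*Bound.* Distinct faces are at distance at least `1`, so every coupling costs at least
`1 - ∑ G, min (m_F G) (m_F' G)` (`wass_ge`). In that sum the faces `G ⊇ F ∩ F'`, which include `F`
and `F'`, contribute at most `ε / (i+1)` altogether, and the only other nonzero terms come from
common neighbours `G` of `F` and `F'` with `F ∩ G ≠ F ∩ F'`; these are exactly the terms of the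
claimed sum (`min_pm_le`).
-/


open Finset Filter

namespace SCRicci

variable {V : Type*}

/-- `K` is an abstract simplicial complex: faces are nonempty finite sets and
nonempty subsets of faces are again faces. -/
def IsComplex [DecidableEq V] (K : Finset (Finset V)) : Prop :=
  ∀ F ∈ K, F.Nonempty ∧ ∀ E : Finset V, E ⊆ F → E.Nonempty → E ∈ K

/-- The set `S_i(K)` of `i`-faces of `K` (faces of cardinality `i+1`). -/
def faces [DecidableEq V] (K : Finset (Finset V)) (i : ℕ) : Finset (Finset V) :=
  K.filter fun F => F.card = i + 1

/-- Two `i`-faces are connected, `F ~ F'`, if they are distinct and share a common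
`(i-1)`-face, which is necessarily `F ∩ F'`. -/
def Conn [DecidableEq V] (i : ℕ) (F F' : Finset V) : Prop :=
  F ≠ F' ∧ (F ∩ F').card = i

noncomputable section

/-- The degree of an `(i-1)`-face `E`: the sum of the weights of the `i`-faces
containing `E`. -/
def deg [DecidableEq V] (K : Finset (Finset V)) (w : Finset V → ℝ) (i : ℕ)
    (E : Finset V) : ℝ :=
  ∑ F ∈ faces K i, if E ⊆ F then w F else 0

/-- `Chain K i n F F'`: there is a path of length `n` of consecutively connected
`i`-faces from `F` to `F'`. -/
def Chain [DecidableEq V] (K : Finset (Finset V)) (i : ℕ) :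
    ℕ → Finset V → Finset V → Prop
  | 0, F, F' => F = F'
  | n + 1, F, F' => ∃ G ∈ faces K i, Conn i F G ∧ Chain K i n G F'

/-- The distance between two `i`-faces: the length of a shortest path of
consecutively connected `i`-faces. -/
def fdist [DecidableEq V] (K : Finset (Finset V)) (i : ℕ) (F F' : Finset V) : ℕ :=
  sInf {n | Chain K i n F F'}

/-- `K` is connected in dimension `i`: any two `i`-faces are joined by a path of
consecutively connected `i`-faces. -/
def ComplexConnected [DecidableEq V] (K : Finset (Finset V)) (i : ℕ) : Prop :=
  ∀ F ∈ faces K i, ∀ F' ∈ faces K i, ∃ n, Chain K i n F F'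

/-- The probability measure `m_F^ε` on the `i`-faces of `K`. -/
def pm [DecidableEq V] (K : Finset (Finset V)) (w : Finset V → ℝ) (i : ℕ) (ε : ℝ)
    (F F' : Finset V) : ℝ :=
  if F' = F then
    1 - ε + ε / ((i : ℝ) + 1) * ∑ E ∈ F.powersetCard i, w F / deg K w i E
  else if F' ∈ faces K i ∧ (F ∩ F').card = i then
    ε * w F' / (((i : ℝ) + 1) * deg K w i (F ∩ F'))
  else 0

/-- The 1-Wasserstein distance between two measures on the `i`-faces of `K`:
the infimum of the transport cost over all couplings. -/
def Wass [DecidableEq V] (K : Finset (Finset V)) (i : ℕ) (μ ν : Finset V → ℝ) : ℝ :=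
  sInf {c : ℝ | ∃ A : Finset V → Finset V → ℝ,
    (∀ F₁ F₂, 0 ≤ A F₁ F₂) ∧
    (∀ F₁ ∈ faces K i, ∑ F₂ ∈ faces K i, A F₁ F₂ = μ F₁) ∧
    (∀ F₂ ∈ faces K i, ∑ F₁ ∈ faces K i, A F₁ F₂ = ν F₂) ∧
    c = ∑ F₁ ∈ faces K i, ∑ F₂ ∈ faces K i, A F₁ F₂ * (fdist K i F₁ F₂ : ℝ)}

/-- The `ε`-Ricci curvature of two distinct `i`-faces:
`κ_ε(F, F') = 1 - W(m_F^ε, m_{F'}^ε) / d(F, F')`. -/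
def kappaEps [DecidableEq V] (K : Finset (Finset V)) (w : Finset V → ℝ) (i : ℕ)
    (ε : ℝ) (F F' : Finset V) : ℝ :=
  1 - Wass K i (pm K w i ε F) (pm K w i ε F') / (fdist K i F F' : ℝ)

/-- The Ricci curvature `κ(F, F')`: the limit of `κ_ε(F, F') / ε` as `ε → 0+`. -/
def ricci [DecidableEq V] (K : Finset (Finset V)) (w : Finset V → ℝ) (i : ℕ)
    (F F' : Finset V) : ℝ :=
  limUnder (nhdsWithin (0 : ℝ) (Set.Ioi 0)) fun ε => kappaEps K w i ε F F' / ε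

/-! ### Faces and degrees -/

lemma mem_faces [DecidableEq V] {K : Finset (Finset V)} {i : ℕ} {F : Finset V} :
    F ∈ faces K i ↔ F ∈ K ∧ F.card = i + 1 := by
  simp [faces]

lemma ne_of_card_inter [DecidableEq V] {K : Finset (Finset V)} {i : ℕ} {F F' : Finset V}
    (hF : F ∈ faces K i) (hE : (F ∩ F').card = i) : F ≠ F' := by
  rintro rfl
  have := (mem_faces.1 hF).2
  simp at hE
  omega

lemma deg_pos [DecidableEq V] {K : Finset (Finset V)} {i : ℕ} {w : Finset V → ℝ}
    (hw : ∀ F ∈ K, 0 < w F) {F E : Finset V} (hF : F ∈ faces K i) (hE : E ⊆ F) :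
    0 < deg K w i E := by
  refine Finset.sum_pos' (fun G hG => ?_) ⟨F, hF, ?_⟩
  · split_ifs
    · exact (hw G (mem_faces.1 hG).1).le
    · exact le_rfl
  · rw [if_pos hE]
    exact hw F (mem_faces.1 hF).1

lemma sum_div_deg [DecidableEq V] {K : Finset (Finset V)} {i : ℕ} {w : Finset V → ℝ}
    (hw : ∀ F ∈ K, 0 < w F) {F E : Finset V} (hF : F ∈ faces K i) (hE : E ⊆ F) :
    ∑ G ∈ faces K i, (if E ⊆ G then w G / deg K w i E else 0) = 1 := by
  have h : ∀ G ∈ faces K i, (if E ⊆ G then w G / deg K w i E else 0)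
      = (if E ⊆ G then w G else 0) / deg K w i E := by
    intro G _
    split_ifs <;> simp
  rw [Finset.sum_congr rfl h, ← Finset.sum_div]
  exact div_self (deg_pos hw hF hE).ne'

/-! ### The measures `pm` -/

/-- The random-walk form of `m_F^ε`: stay with probability `1 - ε`; otherwise choose an
`(i-1)`-face `E` of `F` uniformly and then an `i`-face containing `E` with probability
proportional to its weight. The affine dependence on `ε` is visible in this form. -/
lemma pm_eq [DecidableEq V] {K : Finset (Finset V)} {i : ℕ} {w : Finset V → ℝ} (ε : ℝ)
    {F G : Finset V} (hF : F ∈ faces K i) (hG : G ∈ faces K i) :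
    pm K w i ε F G = (1 - ε) * (if G = F then 1 else 0) + ε / ((i : ℝ) + 1) *
      ∑ E ∈ F.powersetCard i, (if E ⊆ G then w G / deg K w i E else 0) := by
  unfold pm
  by_cases hGF : G = F
  · subst hGF
    rw [if_pos rfl, if_pos rfl, mul_one]
    congr 2
    refine Finset.sum_congr rfl fun E hE => ?_
    rw [if_pos (Finset.mem_powersetCard.1 hE).1]
  rw [if_neg hGF, if_neg hGF, mul_zero, zero_add]
  by_cases hc : (F ∩ G).card = i
  · rw [if_pos ⟨hG, hc⟩, Finset.sum_eq_single (F ∩ G)]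
    · rw [if_pos Finset.inter_subset_right, div_mul_div_comm]
    · intro E hE hne
      rw [if_neg]
      intro hEG
      obtain ⟨hEF, hEc⟩ := Finset.mem_powersetCard.1 hE
      exact hne (Finset.eq_of_subset_of_card_le (Finset.subset_inter hEF hEG) (by omega))
    · intro h
      exact absurd (Finset.mem_powersetCard.2 ⟨Finset.inter_subset_left, hc⟩) h
  · rw [if_neg (fun h => hc h.2), Finset.sum_eq_zero, mul_zero]
    intro E hE
    rw [if_neg]
    intro hEG
    obtain ⟨hEF, hEc⟩ := Finset.mem_powersetCard.1 hE
    have h1 := Finset.card_le_card (Finset.subset_inter hEF hEG)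
    have h2 := Finset.card_le_card (Finset.inter_subset_left : F ∩ G ⊆ F)
    have hFc := (mem_faces.1 hF).2
    have hGc := (mem_faces.1 hG).2
    -- `F ∩ G` has more than `i` elements, hence is all of `F` and of `G`.
    have h3 : F ∩ G = F := Finset.eq_of_subset_of_card_le Finset.inter_subset_left (by omega)
    have h4 : F ∩ G = G := Finset.eq_of_subset_of_card_le Finset.inter_subset_right (by omega)
    exact hGF (h4.symm.trans h3)

lemma pm_nonneg [DecidableEq V] {K : Finset (Finset V)} {i : ℕ} {w : Finset V → ℝ}
    (hw : ∀ F ∈ K, 0 < w F) {ε : ℝ} (h0 : 0 ≤ ε) (h1 : ε ≤ 1)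
    {F G : Finset V} (hF : F ∈ faces K i) : 0 ≤ pm K w i ε F G := by
  by_cases hG : G ∈ faces K i
  · rw [pm_eq ε hF hG]
    refine add_nonneg (mul_nonneg (by linarith) (by split_ifs <;> norm_num))
      (mul_nonneg (by positivity) (Finset.sum_nonneg fun E hE => ?_))
    split_ifs
    · exact div_nonneg (hw G (mem_faces.1 hG).1).le
        (deg_pos hw hF (Finset.mem_powersetCard.1 hE).1).le
    · exact le_rfl
  · have hGF : G ≠ F := fun h => hG (h ▸ hF)
    simp [pm, hGF, hG]

lemma pm_sum [DecidableEq V] {K : Finset (Finset V)} {i : ℕ} {w : Finset V → ℝ}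
    (hw : ∀ F ∈ K, 0 < w F) (ε : ℝ) {F : Finset V} (hF : F ∈ faces K i) :
    ∑ G ∈ faces K i, pm K w i ε F G = 1 := by
  rw [Finset.sum_congr rfl fun G hG => pm_eq ε hF hG, Finset.sum_add_distrib,
    ← Finset.mul_sum, ← Finset.mul_sum, Finset.sum_comm,
    Finset.sum_congr rfl fun E hE => sum_div_deg hw hF (Finset.mem_powersetCard.1 hE).1]
  have hi : (i : ℝ) + 1 ≠ 0 := by positivity
  simp [hF, (mem_faces.1 hF).2, hi]

/-! ### Distances -/

lemma one_le_fdist [DecidableEq V] {K : Finset (Finset V)} {i : ℕ}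
    (hconn : ComplexConnected K i) {F G : Finset V} (hF : F ∈ faces K i) (hG : G ∈ faces K i)
    (hne : F ≠ G) : 1 ≤ fdist K i F G := by
  rw [Nat.one_le_iff_ne_zero]
  intro h
  rcases Nat.sInf_eq_zero.1 h with h | h
  · exact hne h
  · obtain ⟨n, hn⟩ := hconn F hF G hG
    exact (h ▸ (show n ∈ {n | Chain K i n F G} from hn) : n ∈ (∅ : Set ℕ))

lemma fdist_eq_one [DecidableEq V] {K : Finset (Finset V)} {i : ℕ}
    (hconn : ComplexConnected K i) {F G : Finset V} (hF : F ∈ faces K i) (hG : G ∈ faces K i)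
    (hE : (F ∩ G).card = i) : fdist K i F G = 1 := by
  have hne := ne_of_card_inter hF hE
  exact le_antisymm (Nat.sInf_le (show Chain K i 1 F G from ⟨G, hG, ⟨hne, hE⟩, rfl⟩))
    (one_le_fdist hconn hF hG hne)

/-! ### Couplings and the Wasserstein distance -/

/-- `c` is the cost of a coupling of `μ` and `ν`, so that `Wass K i μ ν` is the infimum of
all such `c`. -/
def IsCost [DecidableEq V] (K : Finset (Finset V)) (i : ℕ) (μ ν : Finset V → ℝ) (c : ℝ) : Prop :=
  ∃ A : Finset V → Finset V → ℝ,
    (∀ F₁ F₂, 0 ≤ A F₁ F₂) ∧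
    (∀ F₁ ∈ faces K i, ∑ F₂ ∈ faces K i, A F₁ F₂ = μ F₁) ∧
    (∀ F₂ ∈ faces K i, ∑ F₁ ∈ faces K i, A F₁ F₂ = ν F₂) ∧
    c = ∑ F₁ ∈ faces K i, ∑ F₂ ∈ faces K i, A F₁ F₂ * (fdist K i F₁ F₂ : ℝ)

lemma wass_le_cost [DecidableEq V] {K : Finset (Finset V)} {i : ℕ} {μ ν : Finset V → ℝ} {c : ℝ}
    (h : IsCost K i μ ν c) : Wass K i μ ν ≤ c := by
  refine csInf_le ⟨0, ?_⟩ h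
  rintro _ ⟨A, hA, _, _, rfl⟩
  exact Finset.sum_nonneg fun _ _ => Finset.sum_nonneg fun _ _ =>
    mul_nonneg (hA _ _) (Nat.cast_nonneg _)

/-- The product coupling. -/
lemma exists_cost [DecidableEq V] {K : Finset (Finset V)} {i : ℕ} {μ ν : Finset V → ℝ}
    (hμ : ∀ G, 0 ≤ μ G) (hν : ∀ G, 0 ≤ ν G) (hμ1 : ∑ G ∈ faces K i, μ G = 1)
    (hν1 : ∑ G ∈ faces K i, ν G = 1) : ∃ c, IsCost K i μ ν c := by
  refine ⟨_, fun G H => μ G * ν H, fun G H => mul_nonneg (hμ G) (hν H), ?_, ?_, rfl⟩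
  · intro G _
    rw [← Finset.mul_sum, hν1, mul_one]
  · intro H _
    rw [← Finset.sum_mul, hμ1, one_mul]

/-- At most `min (μ G) (ν G)` of the mass can stay at `G`, and all other mass travels a distance
of at least `1`. -/
lemma wass_ge [DecidableEq V] {K : Finset (Finset V)} {i : ℕ} (hconn : ComplexConnected K i)
    {μ ν : Finset V → ℝ}
    (hμ : ∀ G, 0 ≤ μ G) (hν : ∀ G, 0 ≤ ν G) (hμ1 : ∑ G ∈ faces K i, μ G = 1)
    (hν1 : ∑ G ∈ faces K i, ν G = 1) :
    1 - ∑ G ∈ faces K i, min (μ G) (ν G) ≤ Wass K i μ ν := by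
  refine le_csInf (exists_cost hμ hν hμ1 hν1) ?_
  rintro _ ⟨A, hA, hrow, hcol, rfl⟩
  rw [← hμ1, ← Finset.sum_sub_distrib]
  refine Finset.sum_le_sum fun G hG => ?_
  have hdiag : A G G ≤ min (μ G) (ν G) := by
    refine le_min ?_ ?_
    · rw [← hrow G hG]
      exact Finset.single_le_sum (f := fun H => A G H) (fun H _ => hA G H) hG
    · rw [← hcol G hG]
      exact Finset.single_le_sum (f := fun H => A H G) (fun H _ => hA H G) hG
  have hsum : μ G - A G G ≤ ∑ H ∈ faces K i, A G H * (fdist K i G H : ℝ) := by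
    rw [← hrow G hG, ← Finset.add_sum_erase _ _ hG, add_sub_cancel_left,
      ← Finset.add_sum_erase _ (fun H => A G H * (fdist K i G H : ℝ)) hG]
    refine le_add_of_nonneg_of_le (mul_nonneg (hA _ _) (Nat.cast_nonneg _)) ?_
    refine Finset.sum_le_sum fun H hH => ?_
    obtain ⟨hne, hH⟩ := Finset.mem_erase.1 hH
    exact le_mul_of_one_le_right (hA _ _)
      (by exact_mod_cast one_le_fdist hconn hG hH hne.symm)
  linarith

/-- Convexity of the Wasserstein distance along the affine family `pm ε`, between the parameters
`0` (where it equals `d(F, F') = 1`) and `t`. -/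
lemma wass_convex [DecidableEq V] {K : Finset (Finset V)} {i : ℕ} (hconn : ComplexConnected K i)
    {w : Finset V → ℝ} (hw : ∀ F ∈ K, 0 < w F) {F F' : Finset V}
    (hF : F ∈ faces K i) (hF' : F' ∈ faces K i) (hE : (F ∩ F').card = i)
    {s t : ℝ} (hs : 0 < s) (hst : s ≤ t) (ht : t ≤ 1) :
    Wass K i (pm K w i s F) (pm K w i s F') ≤
      (1 - s / t) + s / t * Wass K i (pm K w i t F) (pm K w i t F') := by
  have ht0 : 0 < t := hs.trans_le hst
  have hr : 0 < s / t := div_pos hs ht0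
  have hr1 : s / t ≤ 1 := (div_le_one ht0).2 hst
  have hpm : ∀ G ∈ faces K i, ∀ H ∈ faces K i, pm K w i s G H =
      (1 - s / t) * (if H = G then 1 else 0) + s / t * pm K w i t G H := by
    intro G hG H hH
    rw [pm_eq s hG hH, pm_eq t hG hH]
    field_simp
    ring
  -- It suffices to treat each coupling at parameter `t` separately.
  have key : ∀ c, IsCost K i (pm K w i t F) (pm K w i t F') c →
      (Wass K i (pm K w i s F) (pm K w i s F') - (1 - s / t)) / (s / t) ≤ c := by
    rintro _ ⟨A, hA, hrow, hcol, rfl⟩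
    rw [div_le_iff₀ hr, sub_le_iff_le_add]
    refine wass_le_cost ⟨fun G H => (1 - s / t) * ((if G = F then 1 else 0) *
      (if H = F' then 1 else 0)) + s / t * A G H, ?_, ?_, ?_, ?_⟩
    · intro G H
      refine add_nonneg (mul_nonneg (by linarith) ?_) (mul_nonneg hr.le (hA _ _))
      split_ifs <;> norm_num
    · intro G hG
      rw [Finset.sum_add_distrib, ← Finset.mul_sum, ← Finset.mul_sum, ← Finset.mul_sum,
        hrow G hG, hpm F hF G hG]
      simp [hF']
    · intro H hH
      rw [Finset.sum_add_distrib, ← Finset.mul_sum, ← Finset.mul_sum, ← Finset.sum_mul,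
        hcol H hH, hpm F' hF' H hH]
      simp [hF]
    · have hd := fdist_eq_one hconn hF hF' hE
      have h1 : ∑ G ∈ faces K i, ∑ H ∈ faces K i, ((if G = F then (1 : ℝ) else 0) *
          (if H = F' then 1 else 0)) * (fdist K i G H : ℝ) = 1 := by
        rw [Finset.sum_eq_single_of_mem F hF, Finset.sum_eq_single_of_mem F' hF']
        · simp [hd]
        · intro H _ hH
          simp [hH]
        · intro G _ hG
          simp [hG]
      simp only [add_mul, Finset.sum_add_distrib, mul_assoc, ← Finset.mul_sum] at h1 ⊢
      rw [h1]
      ring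
  have := le_csInf (exists_cost (fun _ => pm_nonneg hw ht0.le ht hF)
    (fun _ => pm_nonneg hw ht0.le ht hF') (pm_sum hw t hF) (pm_sum hw t hF')) key
  rw [div_le_iff₀ hr] at this
  change _ ≤ Wass K i (pm K w i t F) (pm K w i t F') * _ at this
  linarith

/-! ### Common mass of the measures of two adjacent faces -/

/-- The mass at `G` common to `m_F^ε` and `m_{F'}^ε` is accounted for either by
`F ∩ F' ⊆ G` or by `G` being a common neighbour across other `(i-1)`-faces. -/
lemma min_pm_le [DecidableEq V] {K : Finset (Finset V)} {i : ℕ}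
    {w : Finset V → ℝ} (hw : ∀ F ∈ K, 0 < w F) {F F' : Finset V}
    (hF : F ∈ faces K i) (hF' : F' ∈ faces K i) (hE : (F ∩ F').card = i)
    {ε : ℝ} (hε : 0 ≤ ε) {G : Finset V} (hG : G ∈ faces K i) :
    min (pm K w i ε F G) (pm K w i ε F' G) ≤ ε / ((i : ℝ) + 1) *
      ((if F ∩ F' ⊆ G then w G / deg K w i (F ∩ F') else 0) +
       if (G ≠ F ∧ (F ∩ G).card = i ∧ F ∩ G ≠ F ∩ F') ∧ (G ≠ F' ∧ (F' ∩ G).card = i) then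
        w G / max (deg K w i (F ∩ G)) (deg K w i (F' ∩ G)) else 0) := by
  have hne := ne_of_card_inter hF hE
  have hwG := hw G (mem_faces.1 hG).1
  have hc : 0 ≤ ε / ((i : ℝ) + 1) := by positivity
  have hdE := deg_pos hw hF (Finset.inter_subset_left : F ∩ F' ⊆ F)
  have ha : 0 ≤ (if F ∩ F' ⊆ G then w G / deg K w i (F ∩ F') else 0) := by
    split_ifs
    · positivity
    · exact le_rfl
  have hb : 0 ≤ if (G ≠ F ∧ (F ∩ G).card = i ∧ F ∩ G ≠ F ∩ F') ∧
      (G ≠ F' ∧ (F' ∩ G).card = i) then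
        w G / max (deg K w i (F ∩ G)) (deg K w i (F' ∩ G)) else 0 := by
    split_ifs
    · exact div_nonneg hwG.le (le_max_of_le_left
        (deg_pos hw hF Finset.inter_subset_left).le)
    · exact le_rfl
  have hpm : ∀ {H : Finset V}, G ≠ H → (H ∩ G).card = i →
      pm K w i ε H G = ε / ((i : ℝ) + 1) * (w G / deg K w i (H ∩ G)) := by
    intro H h1 h2
    rw [pm, if_neg h1, if_pos ⟨hG, h2⟩, div_mul_div_comm]
  by_cases h1 : G = F
  · refine (min_le_right _ _).trans ?_
    have hE' : (F' ∩ G).card = i := by rw [h1, Finset.inter_comm, hE]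
    rw [hpm (h1 ▸ hne) hE']
    refine mul_le_mul_of_nonneg_left (le_add_of_le_of_nonneg ?_ hb) hc
    rw [if_pos (h1 ▸ Finset.inter_subset_left), h1, Finset.inter_comm]
  by_cases h2 : (F ∩ G).card = i
  swap
  · refine (min_le_left _ _).trans ?_
    rw [pm, if_neg h1, if_neg (fun h => h2 h.2)]
    exact mul_nonneg hc (add_nonneg ha hb)
  by_cases h3 : F ∩ G = F ∩ F'
  · refine (min_le_left _ _).trans ?_
    rw [hpm h1 h2]
    refine mul_le_mul_of_nonneg_left (le_add_of_le_of_nonneg ?_ hb) hc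
    rw [if_pos (h3 ▸ Finset.inter_subset_right), h3]
  have h4 : G ≠ F' := by
    rintro rfl
    exact h3 rfl
  by_cases h5 : (F' ∩ G).card = i
  swap
  · refine (min_le_right _ _).trans ?_
    rw [pm, if_neg h4, if_neg (fun h => h5 h.2)]
    exact mul_nonneg hc (add_nonneg ha hb)
  rw [hpm h1 h2, hpm h4 h5]
  refine le_trans ?_ (mul_le_mul_of_nonneg_left (le_add_of_nonneg_left ha) hc)
  rw [if_pos ⟨⟨h1, h2, h3⟩, h4, h5⟩]
  rcases max_choice (deg K w i (F ∩ G)) (deg K w i (F' ∩ G)) with h | h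
  · rw [h]
    exact min_le_left _ _
  · rw [h]
    exact min_le_right _ _

/-- Upper bound for the Ricci curvature of two connected `i`-faces
`F`, `F'` with `F ∩ F' = E` an `(i-1)`-face, where the sum runs over
`F'' ∈ (Γ(F) ∖ Γ_E(F)) ∩ Γ(F')`, `Ē = F ∩ F''` and `Ē' = F' ∩ F''`. -/
theorem ricci_upper_bound {V : Type*} [Fintype V] [DecidableEq V]
    (K : Finset (Finset V)) (i : ℕ) (hi : 1 ≤ i)
    (hK : IsComplex K) (hconn : ComplexConnected K i)
    (w : Finset V → ℝ) (hwpos : ∀ F ∈ K, 0 < w F)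
    (F F' : Finset V) (hF : F ∈ faces K i) (hF' : F' ∈ faces K i)
    (hE : (F ∩ F').card = i) :
    ricci K w i F F' ≤ 1 / ((i : ℝ) + 1) *
      (1 + ∑ F'' ∈ (faces K i).filter (fun F'' =>
          (F'' ≠ F ∧ (F ∩ F'').card = i ∧ F ∩ F'' ≠ F ∩ F') ∧
          (F'' ≠ F' ∧ (F' ∩ F'').card = i)),
        w F'' / max (deg K w i (F ∩ F'')) (deg K w i (F' ∩ F''))) := by
  set B : ℝ := 1 / ((i : ℝ) + 1) *
      (1 + ∑ F'' ∈ (faces K i).filter (fun F'' =>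
          (F'' ≠ F ∧ (F ∩ F'').card = i ∧ F ∩ F'' ≠ F ∩ F') ∧
          (F'' ≠ F' ∧ (F' ∩ F'').card = i)),
        w F'' / max (deg K w i (F ∩ F'')) (deg K w i (F' ∩ F''))) with hB
  have hd : (fdist K i F F' : ℝ) = 1 := by exact_mod_cast fdist_eq_one hconn hF hF' hE
  have hkappa : ∀ ε, kappaEps K w i ε F F' = 1 - Wass K i (pm K w i ε F) (pm K w i ε F') := by
    intro ε
    rw [kappaEps, hd, div_one]
  have hbound : ∀ ε ∈ Set.Ioo (0 : ℝ) 1, kappaEps K w i ε F F' / ε ≤ B := by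
    rintro ε ⟨h0, h1⟩
    have hW := wass_ge hconn (fun _ => pm_nonneg hwpos h0.le h1.le hF)
      (fun _ => pm_nonneg hwpos h0.le h1.le hF') (pm_sum hwpos ε hF) (pm_sum hwpos ε hF')
    have hmin := Finset.sum_le_sum fun G hG => min_pm_le hwpos hF hF' hE h0.le (G := G) hG
    rw [← Finset.mul_sum, Finset.sum_add_distrib,
      sum_div_deg hwpos hF Finset.inter_subset_left, ← Finset.sum_filter] at hmin
    rw [hkappa, div_le_iff₀ h0]
    have hBε : B * ε = ε / ((i : ℝ) + 1) * (1 + ∑ F'' ∈ (faces K i).filter (fun F'' =>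
          (F'' ≠ F ∧ (F ∩ F'').card = i ∧ F ∩ F'' ≠ F ∩ F') ∧
          (F'' ≠ F' ∧ (F' ∩ F'').card = i)),
        w F'' / max (deg K w i (F ∩ F'')) (deg K w i (F' ∩ F''))) := by
      rw [hB]
      ring
    rw [hBε]
    linarith
  -- Mathlib's one-sided limit lemma is for monotone functions bounded below, hence the sign.
  have hmono : MonotoneOn (fun ε => -(kappaEps K w i ε F F' / ε)) (Set.Ioo (0 : ℝ) 1) := by
    rintro s ⟨hs, _⟩ t ⟨ht, ht1⟩ hst
    have hW := wass_convex hconn hwpos hF hF' hE hs hst ht1.le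
    simp only [hkappa]
    rw [neg_le_neg_iff, le_div_iff₀ hs]
    have : (1 - Wass K i (pm K w i t F) (pm K w i t F')) / t * s
        = s / t - s / t * Wass K i (pm K w i t F) (pm K w i t F') := by
      ring
    linarith
  have hbdd : BddBelow ((fun ε => -(kappaEps K w i ε F F' / ε)) '' Set.Ioo (0 : ℝ) 1) := by
    refine ⟨-B, ?_⟩
    rintro _ ⟨ε, hε, rfl⟩
    exact neg_le_neg (hbound ε hε)
  have hlim := (hmono.tendsto_nhdsWithin_Ioo_right (by simp) hbdd).neg
  simp only [neg_neg] at hlim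
  rw [ricci, hlim.limUnder_eq]
  refine le_of_tendsto hlim ?_
  filter_upwards [Ioo_mem_nhdsGT (zero_lt_one' ℝ)] with ε hε using hbound ε hε

end
end SCRicci
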